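/- Let f : ℝ → ℝ be differentiable with f(r) − r² = O(r) and f'(r) − 2r = O(1) as r → ∞, and define a(x) = √(f(cot x)) · sin²x. Then the derivative a' satisfies a'(x) − 1 = O(x) as x → 0⁺. -/

import Mathlib

/-!
Write `r = cot x` and `s = √(f r)`. Since `(cot x)' = -1 / sin² x`, the derivative simplifies to
`a'(x) = -f'(r) / (2 s) + 2 s sin x cos x`. Put `e = s - r` and `d = f'(r) - 2 r`. Both are bounded
as `r → ∞` (`sqrt_sub_self_isBigO_one` for `e`), and `r sin x = cos x`, so
`a'(x) - 1 = -2 sin² x + (2 e - d) / (2 s) + 2 e sin x cos x`.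
Each term is `O(x)`, because `s ≥ r / 2` for large `r` and `1 / r = tan x`.
-/

open Filter Asymptotics

theorem tendsto_cot_nhdsGT_zero :
    Tendsto Real.cot (nhdsWithin (0:ℝ) (Set.Ioi 0)) atTop := by
  have hs : Tendsto Real.sin (nhdsWithin (0:ℝ) (Set.Ioi 0)) (nhdsWithin (0:ℝ) (Set.Ioi 0)) := by
    refine tendsto_nhdsWithin_iff.2 ⟨?_, ?_⟩
    · exact (Real.continuous_sin.tendsto' 0 0 Real.sin_zero).mono_left nhdsWithin_le_nhds
    · filter_upwards [Ioo_mem_nhdsGT Real.pi_pos] with x hx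
      exact Real.sin_pos_of_pos_of_lt_pi hx.1 hx.2
  have hc : Tendsto Real.cos (nhdsWithin (0:ℝ) (Set.Ioi 0)) (nhds 1) :=
    (Real.continuous_cos.tendsto' 0 1 Real.cos_zero).mono_left nhdsWithin_le_nhds
  refine (hc.pos_mul_atTop one_pos (tendsto_inv_nhdsGT_zero.comp hs)).congr fun x => ?_
  simp [Real.cot_eq_cos_div_sin, div_eq_mul_inv]

/-- The bound follows from `√(f r) - r = (f r - r²) / (√(f r) + r)`. -/
theorem sqrt_sub_self_isBigO_one {f : ℝ → ℝ}
    (hf : (fun r : ℝ => f r - r ^ 2) =O[atTop] (fun r : ℝ => r)) :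
    ∃ C : ℝ, 0 < C ∧ ∀ᶠ r in atTop, 0 < f r ∧ |Real.sqrt (f r) - r| ≤ C := by
  obtain ⟨C, hC, h⟩ := hf.exists_pos
  refine ⟨C, hC, ?_⟩
  filter_upwards [h.bound, eventually_gt_atTop C] with r hr hrC
  have hr0 : 0 < r := hC.trans hrC
  rw [Real.norm_eq_abs, Real.norm_eq_abs, abs_of_pos hr0] at hr
  have hpos : 0 < f r := by nlinarith [(abs_le.1 hr).1]
  refine ⟨hpos, ?_⟩
  have hs := Real.sqrt_nonneg (f r)
  have hsq := Real.sq_sqrt hpos.le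
  have hfac : f r - r ^ 2 = (Real.sqrt (f r) - r) * (Real.sqrt (f r) + r) := by
    linear_combination -hsq
  rw [hfac, abs_mul, abs_of_pos (by linarith : 0 < Real.sqrt (f r) + r)] at hr
  have hle : |Real.sqrt (f r) - r| * r ≤ C * r :=
    (mul_le_mul_of_nonneg_left (by linarith) (abs_nonneg _)).trans hr
  exact le_of_mul_le_mul_right hle hr0

theorem hasDerivAt_sqrt_comp_cot_mul_sin_sq {f : ℝ → ℝ} (hdiff : Differentiable ℝ f) {x : ℝ}
    (hx : Real.sin x ≠ 0) (hpos : 0 < f (Real.cot x)) :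
    HasDerivAt (fun x => Real.sqrt (f (Real.cot x)) * Real.sin x ^ 2)
      (-deriv f (Real.cot x) / (2 * Real.sqrt (f (Real.cot x)))
        + 2 * Real.sqrt (f (Real.cot x)) * Real.sin x * Real.cos x) x := by
  have hcot : HasDerivAt Real.cot (-1 / Real.sin x ^ 2) x := by
    have h := (Real.hasDerivAt_cos x).div (Real.hasDerivAt_sin x) hx
    have hfun : Real.cot = Real.cos / Real.sin := by
      funext y; simp [Real.cot_eq_cos_div_sin]
    rw [hfun]
    refine h.congr_deriv ?_
    congr 1
    linear_combination -Real.sin_sq_add_cos_sq x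
  have hF := ((hdiff (Real.cot x)).hasDerivAt.comp x hcot).sqrt hpos.ne'
  have h := hF.mul ((Real.hasDerivAt_sin x).pow 2)
  refine HasDerivAt.congr_deriv h ?_
  have hs : Real.sqrt (f (Real.cot x)) ≠ 0 := (Real.sqrt_pos.2 hpos).ne'
  simp only [Function.comp, Pi.pow_apply]
  field_simp
  push_cast
  ring

/-- If `f` is differentiable with `f(r) - r² = O(r)` and `f'(r) - 2r = O(1)` as `r → ∞`, and
`a(x) = √(f(cot x)) · sin²x`, then `a'(x) - 1 = O(x)` as `x → 0⁺`. -/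
theorem stmt9 (f : ℝ → ℝ) (hdiff : Differentiable ℝ f)
    (hf : (fun r : ℝ => f r - r ^ 2) =O[atTop] (fun r : ℝ => r))
    (hf' : (fun r : ℝ => deriv f r - 2 * r) =O[atTop] (fun _ : ℝ => (1:ℝ)))
    (a : ℝ → ℝ) (ha : a = fun x => Real.sqrt (f (Real.cot x)) * Real.sin x ^ 2) :
    (fun x : ℝ => deriv a x - 1) =O[nhdsWithin (0:ℝ) (Set.Ioi 0)] (fun x : ℝ => x) := by
  subst ha
  obtain ⟨C, hC, hsqrt⟩ := sqrt_sub_self_isBigO_one hf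
  obtain ⟨D, hD, hder⟩ := hf'.exists_pos
  have hcos : ∀ᶠ x in nhdsWithin (0:ℝ) (Set.Ioi 0), 1 / 2 < Real.cos x :=
    ((Real.continuous_cos.tendsto' 0 1 Real.cos_zero).mono_left nhdsWithin_le_nhds).eventually
      (lt_mem_nhds (by norm_num))
  refine IsBigO.of_bound (2 + (2 * C + D) * 2 + 2 * C) ?_
  filter_upwards [tendsto_cot_nhdsGT_zero.eventually hsqrt,
    tendsto_cot_nhdsGT_zero.eventually hder.bound,
    tendsto_cot_nhdsGT_zero.eventually (eventually_gt_atTop (2 * C)), hcos,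
    Ioo_mem_nhdsGT Real.pi_pos] with x ⟨hpos, he⟩ hd hr hc hx
  have hsin : 0 < Real.sin x := Real.sin_pos_of_pos_of_lt_pi hx.1 hx.2
  have hsinx : Real.sin x ≤ x := Real.sin_le hx.1.le
  rw [(hasDerivAt_sqrt_comp_cot_mul_sin_sq hdiff hsin.ne' hpos).deriv]
  have hrs : Real.cot x * Real.sin x = Real.cos x := by
    rw [Real.cot_eq_cos_div_sin, div_mul_cancel₀ _ hsin.ne']
  have hspos := Real.sqrt_pos.2 hpos
  simp only [Real.norm_eq_abs, abs_one, mul_one] at hd ⊢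
  rw [abs_of_pos hx.1]
  generalize Real.sqrt (f (Real.cot x)) = s at *
  generalize deriv f (Real.cot x) = p at *
  generalize Real.cot x = r at *
  have hsc := Real.sin_sq_add_cos_sq x
  have hc1 := Real.cos_le_one x
  have hs1 := Real.sin_le_one x
  generalize Real.sin x = S at *
  generalize Real.cos x = c at *
  have hid : -p / (2 * s) + 2 * s * S * c - 1
      = -(2 * S ^ 2) + (2 * (s - r) - (p - 2 * r)) / (2 * s) + 2 * (s - r) * S * c := by
    have h1 : -p / (2 * s) = -1 + (2 * (s - r) - (p - 2 * r)) / (2 * s) := by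
      field_simp; ring
    rw [h1]
    linear_combination 2 * c * hrs + 2 * hsc
  have hT1 : |-(2 * S ^ 2)| ≤ 2 * x := by
    rw [abs_neg, abs_of_nonneg (by positivity)]
    nlinarith
  have hT2 : |(2 * (s - r) - (p - 2 * r)) / (2 * s)| ≤ (2 * C + D) * 2 * x := by
    rw [abs_div, abs_of_pos (by linarith : 0 < 2 * s), div_le_iff₀ (by linarith)]
    have hnum : |2 * (s - r) - (p - 2 * r)| ≤ 2 * C + D := by
      rw [abs_le] at *
      constructor <;> linarith
    -- `s ≥ r / 2` and `r x ≥ r sin x = cos x ≥ 1 / 2`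
    have hsx : 1 ≤ 4 * (s * x) := by
      have : r / 2 ≤ s := by linarith [(abs_le.1 he).1]
      nlinarith [mul_le_mul this hsinx hsin.le hspos.le]
    nlinarith
  have hT3 : |2 * (s - r) * S * c| ≤ 2 * C * x := by
    rw [abs_mul, abs_mul, abs_mul, abs_of_pos hsin, abs_of_pos (by linarith : 0 < c), abs_two]
    calc 2 * |s - r| * S * c ≤ 2 * C * x * 1 := by
          have := hx.1
          gcongr
      _ = 2 * C * x := mul_one _
  rw [hid]
  refine (abs_add_three _ _ _).trans ?_
  linarith
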